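/- Consider the bilinear program: maximize f(π,x,λ) = αᵀΦx − πᵀλ over π ∈ Π_R (viewed as vectors in ℝ^{S×A} with π ≥ 0 and ∑_a π(s,a) = 1 for all s), x ∈ ℝ^k, and λ ∈ ℝ^{S×A} with λ ≥ 0 and (1−γ)·λ ≥ AΦx − b componentwise. Then (a) the supremum of f over the feasible set equals sup_{π∈Π_R} ρ̃(π); and (b) assuming the all-ones vector 1 lies in the column span of Φ, if the supremum is attained, it is attained at some feasible (π̄, x̄, λ̄) such that π̄ is deterministic and greedy with respect to Φx̄ and π̄ᵀλ̄ = 0. -/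

import Mathlib

open Matrix BigOperators

namespace DRADP

variable {S A K : Type*} [Fintype S] [Fintype A] [Fintype K] [DecidableEq S] [DecidableEq A]

/-- A randomized policy: nonnegative with rows summing to one. -/
def isPolicy (π : S → A → ℝ) : Prop :=
  (∀ s a, 0 ≤ π s a) ∧ ∀ s, ∑ a, π s a = 1

/-- The randomized policy corresponding to a deterministic policy `p : S → A`. -/
def detPol (p : S → A) : S → A → ℝ := fun s a => if a = p s then 1 else 0

/-- Transition matrix `P_π` of a policy. -/
noncomputable def Pmat (P : S → A → S → ℝ) (π : S → A → ℝ) : Matrix S S ℝ :=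
  Matrix.of fun s s' => ∑ a, P s a s' * π s a

/-- Reward vector `r_π` of a policy. -/
noncomputable def rvec (r : S → A → ℝ) (π : S → A → ℝ) : S → ℝ :=
  fun s => ∑ a, r s a * π s a

/-- State occupancy frequency `d_π = (1-γ)·∑_t γ^t (P_πᵀ)^t α`. -/
noncomputable def dOcc (P : S → A → S → ℝ) (α : S → ℝ) (γ : ℝ) (π : S → A → ℝ) : S → ℝ :=
  fun s => (1 - γ) * ∑' t : ℕ, γ ^ t * (((Pmat P π)ᵀ ^ t) *ᵥ α) s

/-- State-action occupancy frequency `u_π(s,a) = d_π(s)·π(s,a)`. -/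
noncomputable def uOcc (P : S → A → S → ℝ) (α : S → ℝ) (γ : ℝ) (π : S → A → ℝ) : S × A → ℝ :=
  fun w => dOcc P α γ π w.1 * π w.1 w.2

/-- Value function `v_π = ∑_t γ^t P_π^t r_π`. -/
noncomputable def vVal (P : S → A → S → ℝ) (r : S → A → ℝ) (γ : ℝ) (π : S → A → ℝ) : S → ℝ :=
  fun s => ∑' t : ℕ, γ ^ t * ((Pmat P π ^ t) *ᵥ rvec r π) s

/-- The return `ρ(π) = αᵀ v_π`. -/
noncomputable def ret (P : S → A → S → ℝ) (r : S → A → ℝ) (α : S → ℝ) (γ : ℝ)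
    (π : S → A → ℝ) : ℝ :=
  ∑ s, α s * vVal P r γ π s

/-- The matrix `A` with rows `A((s,a),·) = e_sᵀ − γ·P(s,a,·)`. -/
def Amat (P : S → A → S → ℝ) (γ : ℝ) : Matrix (S × A) S ℝ :=
  Matrix.of fun w s' => (if w.1 = s' then (1 : ℝ) else 0) - γ * P w.1 w.2 s'

/-- The vector `b(s,a) = r(s,a)`. -/
def bvec (r : S → A → ℝ) : S × A → ℝ := fun w => r w.1 w.2

/-- `U = {u : u ≥ 0, Aᵀu = (1−γ)·α}`. -/
def Uset (P : S → A → S → ℝ) (α : S → ℝ) (γ : ℝ) : Set (S × A → ℝ) :=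
  {u | (∀ w, 0 ≤ u w) ∧ (Amat P γ)ᵀ *ᵥ u = fun s => (1 - γ) * α s}

/-- The Bellman operator `L`. -/
noncomputable def bell (P : S → A → S → ℝ) (r : S → A → ℝ) (γ : ℝ) (v : S → ℝ) : S → ℝ :=
  fun s => ⨆ a : A, (r s a + γ * ∑ s', P s a s' * v s')

/-- A deterministic policy `p` is greedy w.r.t. `v`. -/
def isGreedy (P : S → A → S → ℝ) (r : S → A → ℝ) (γ : ℝ) (p : S → A) (v : S → ℝ) : Prop :=
  ∀ s a, r s a + γ * ∑ s', P s a s' * v s' ≤ r s (p s) + γ * ∑ s', P s (p s) s' * v s'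

/-- Approximate occupancy frequencies `Ũ(π)`. -/
def Utilde (P : S → A → S → ℝ) (α : S → ℝ) (γ : ℝ) (Φ : Matrix S K ℝ) (π : S → A → ℝ) :
    Set (S × A → ℝ) :=
  {u | (∀ w, 0 ≤ u w) ∧
    (Φᵀ *ᵥ ((Amat P γ)ᵀ *ᵥ u) = fun j => (1 - γ) * (Φᵀ *ᵥ α) j) ∧
    ∀ w, u w ≤ π w.1 w.2}

/-- The distributionally robust return estimate
`ρ̃(π) = sup_{v∈Ṽ} (αᵀv − sup_{u∈Ũ(π)} uᵀ(Av − b)/(1−γ))`. -/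
noncomputable def rhoTilde (P : S → A → S → ℝ) (r : S → A → ℝ) (α : S → ℝ) (γ : ℝ)
    (Φ : Matrix S K ℝ) (π : S → A → ℝ) : ℝ :=
  ⨆ x : K → ℝ, (∑ s, α s * (Φ *ᵥ x) s -
    sSup ((fun u : S × A → ℝ =>
      (∑ w, u w * ((Amat P γ *ᵥ (Φ *ᵥ x)) w - bvec r w)) / (1 - γ)) ''
      Utilde P α γ Φ π))

/-- The set `G` of deterministic policies greedy w.r.t. some representable value function. -/
def greedySet (P : S → A → S → ℝ) (r : S → A → ℝ) (γ : ℝ) (Φ : Matrix S K ℝ) :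
    Set (S → A → ℝ) :=
  {π | ∃ p : S → A, π = detPol p ∧ ∃ x : K → ℝ, isGreedy P r γ p (Φ *ᵥ x)}

end DRADP

open DRADP

namespace DRADP

variable {S A K : Type*} [Fintype S] [Fintype A] [Fintype K] [DecidableEq S] [DecidableEq A]

lemma aux_strong {ι K : Type*} [Fintype ι] [Fintype K] (ub : ι → ℝ) (M : Matrix ι K ℝ)
    (q : K → ℝ) (b : ι → ℝ) (u0 : ι → ℝ) (hu0 : u0 ∈ Set.Icc 0 ub) (hq : Mᵀ *ᵥ u0 = q)
    (hmin : ∀ u ∈ Set.Icc 0 ub, Mᵀ *ᵥ u = q → b ⬝ᵥ u0 ≤ b ⬝ᵥ u) (ε : ℝ) (hε : 0 < ε) :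
    ∃ x : K → ℝ, ∀ u ∈ Set.Icc 0 ub,
      b ⬝ᵥ u0 - ε < q ⬝ᵥ x - u ⬝ᵥ (M *ᵥ x) + b ⬝ᵥ u := by
  classical
  let L : (ι → ℝ) →ₗ[ℝ] (K → ℝ) × ℝ :=
    { toFun := fun u => (Mᵀ *ᵥ u, b ⬝ᵥ u)
      map_add' := fun u v => by simp [Matrix.mulVec_add, dotProduct_add]
      map_smul' := fun c u => by simp [Matrix.mulVec_smul, dotProduct_smul] }
  have hLc : Continuous L := L.continuous_of_finiteDimensional
  have hcl : IsClosed (L '' Set.Icc 0 ub) := (isCompact_Icc.image hLc).isClosed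
  have hcv : Convex ℝ (L '' Set.Icc 0 ub) := (convex_Icc 0 ub).linear_image L
  have hz : ((q, b ⬝ᵥ u0 - ε) : (K → ℝ) × ℝ) ∉ L '' Set.Icc 0 ub := by
    rintro ⟨u, hu, hue⟩
    have h1 : Mᵀ *ᵥ u = q := congrArg Prod.fst hue
    have h2 : b ⬝ᵥ u = b ⬝ᵥ u0 - ε := congrArg Prod.snd hue
    have := hmin u hu h1
    linarith
  obtain ⟨F, c, hF1, hF2⟩ := geometric_hahn_banach_point_closed hcv hcl hz
  let Y : K → ℝ := fun j => F (Pi.single j 1, 0)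
  let T : ℝ := F (0, 1)
  have hF : ∀ (y : K → ℝ) (t : ℝ), F (y, t) = y ⬝ᵥ Y + t * T := by
    intro y t
    have e : ((y, t) : (K → ℝ) × ℝ)
        = (∑ j, y j • ((Pi.single j 1, 0) : (K → ℝ) × ℝ)) + t • (0, 1) := by
      ext k
      · simp [Prod.fst_sum, Finset.sum_apply, Pi.single_apply]
      · simp [Prod.snd_sum]
    rw [e, map_add, map_sum]
    simp only [map_smul, smul_eq_mul]
    rfl
  rw [hF] at hF1
  have hLu : ∀ u ∈ Set.Icc 0 ub, q ⬝ᵥ Y + (b ⬝ᵥ u0 - ε) * T < (Mᵀ *ᵥ u) ⬝ᵥ Y + (b ⬝ᵥ u) * T := by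
    intro u hu
    have := hF2 (L u) ⟨u, hu, rfl⟩
    have e : F (L u) = (Mᵀ *ᵥ u) ⬝ᵥ Y + (b ⬝ᵥ u) * T := hF _ _
    linarith
  have hT : 0 < T := by
    have := hLu u0 hu0
    rw [hq] at this
    nlinarith
  refine ⟨(-T⁻¹) • Y, fun u hu => ?_⟩
  have h := hLu u hu
  have e1 : u ⬝ᵥ (M *ᵥ ((-T⁻¹) • Y)) = (-T⁻¹) * ((Mᵀ *ᵥ u) ⬝ᵥ Y) := by
    rw [Matrix.dotProduct_mulVec, Matrix.mulVec_transpose, dotProduct_smul, smul_eq_mul]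
  rw [e1, dotProduct_smul, smul_eq_mul]
  have h3 := mul_lt_mul_of_pos_left h (inv_pos.2 hT)
  have h4 : T⁻¹ * T = 1 := inv_mul_cancel₀ hT.ne'
  have e2 : T⁻¹ * (q ⬝ᵥ Y + (b ⬝ᵥ u0 - ε) * T) = T⁻¹ * (q ⬝ᵥ Y) + (b ⬝ᵥ u0 - ε) * (T⁻¹ * T) := by
    ring
  have e3 : T⁻¹ * ((Mᵀ *ᵥ u) ⬝ᵥ Y + (b ⬝ᵥ u) * T)
      = T⁻¹ * ((Mᵀ *ᵥ u) ⬝ᵥ Y) + (b ⬝ᵥ u) * (T⁻¹ * T) := by ring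
  rw [e2, e3, h4] at h3
  linarith

lemma aux_nonneg {S : Type*} [Fintype S] (Q : S → S → ℝ) (γ : ℝ) (hQ : ∀ s s', 0 ≤ Q s s')
    (hQs : ∀ s, ∑ s', Q s s' = 1) (hγ0 : 0 ≤ γ) (hγ1 : γ < 1) (d : S → ℝ)
    (hd : ∀ s', γ * ∑ s, d s * Q s s' ≤ d s') (s : S) : 0 ≤ d s := by
  have h1 : ∀ s', max (-d s') 0 ≤ γ * ∑ s, max (-d s) 0 * Q s s' := by
    intro s'
    apply max_le
    · have : ∑ s, -(d s) * Q s s' ≤ ∑ s, max (-d s) 0 * Q s s' :=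
        Finset.sum_le_sum fun i _ => mul_le_mul_of_nonneg_right (le_max_left _ _) (hQ _ _)
      have h2 := mul_le_mul_of_nonneg_left this hγ0
      have h3 : ∑ s, -(d s) * Q s s' = - ∑ s, d s * Q s s' := by
        rw [← Finset.sum_neg_distrib]; simp
      rw [h3] at h2
      have := hd s'
      linarith
    · exact mul_nonneg hγ0 (Finset.sum_nonneg fun i _ => mul_nonneg (le_max_right _ _) (hQ _ _))
  have h2 := Finset.sum_le_sum fun s' (_ : s' ∈ Finset.univ) => h1 s'
  rw [← Finset.mul_sum, Finset.sum_comm] at h2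
  simp only [← Finset.mul_sum, hQs, mul_one] at h2
  have h0 : 0 ≤ ∑ s, max (-d s) 0 := Finset.sum_nonneg fun i _ => le_max_right _ _
  have h4 : ∑ s, max (-d s) 0 = 0 := by nlinarith
  have h5 := (Finset.sum_eq_zero_iff_of_nonneg (fun i _ => le_max_right (-d i) 0)).1 h4 s
    (Finset.mem_univ _)
  have := le_max_left (-d s) 0
  linarith

lemma aux_occ {S : Type*} [Fintype S] (Q : S → S → ℝ) (γ : ℝ) (hQ : ∀ s s', 0 ≤ Q s s')
    (hQs : ∀ s, ∑ s', Q s s' = 1) (hγ0 : 0 ≤ γ) (hγ1 : γ < 1) (α : S → ℝ)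
    (hα : ∀ s, 0 ≤ α s) (hαsum : ∑ s, α s = 1) :
    ∃ d : S → ℝ, (∀ s, 0 ≤ d s) ∧ (∀ s, d s ≤ 1) ∧
      ∀ s', d s' - γ * ∑ s, d s * Q s s' = (1 - γ) * α s' := by
  let L : (S → ℝ) →ₗ[ℝ] (S → ℝ) :=
    { toFun := fun d s' => d s' - γ * ∑ s, d s * Q s s'
      map_add' := fun u v => by
        ext s'; simp only [Pi.add_apply, add_mul, Finset.sum_add_distrib]; ring
      map_smul' := fun c u => by
        ext s'
        simp only [Pi.smul_apply, smul_eq_mul, mul_assoc, ← Finset.mul_sum, RingHom.id_apply]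
        ring }
  have hinj : Function.Injective L := by
    rw [injective_iff_map_eq_zero]
    intro d hd
    have hd' : ∀ s', d s' - γ * ∑ s, d s * Q s s' = 0 := fun s' => congrFun hd s'
    ext s
    have h1 := aux_nonneg Q γ hQ hQs hγ0 hγ1 d (fun s' => by linarith [hd' s']) s
    have h2 := aux_nonneg Q γ hQ hQs hγ0 hγ1 (fun s => - d s) (fun s' => by
      simp only [neg_mul, Finset.sum_neg_distrib]; linarith [hd' s']) s
    simp only [Pi.zero_apply]
    linarith
  obtain ⟨d, hd⟩ := (LinearMap.injective_iff_surjective.1 hinj) (fun s => (1 - γ) * α s)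
  have hd' : ∀ s', d s' - γ * ∑ s, d s * Q s s' = (1 - γ) * α s' := fun s' => congrFun hd s'
  have hnn := aux_nonneg Q γ hQ hQs hγ0 hγ1 d (fun s' => by
    have := mul_nonneg (sub_nonneg.2 hγ1.le) (hα s')
    linarith [hd' s'])
  refine ⟨d, hnn, fun s => ?_, hd'⟩
  have h := Finset.sum_congr rfl fun s' (_ : s' ∈ Finset.univ) => hd' s'
  rw [Finset.sum_sub_distrib, ← Finset.mul_sum, ← Finset.mul_sum, Finset.sum_comm, hαsum] at h
  simp only [← Finset.mul_sum, hQs, mul_one] at h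
  have h1 : ∑ s, d s = 1 := by
    have : (1 - γ) * (∑ s, d s - 1) = 0 := by linarith
    rcases mul_eq_zero.1 this with h | h <;> linarith
  rw [← h1]
  exact Finset.single_le_sum (fun i _ => hnn i) (Finset.mem_univ s)

lemma Amat_mulVec (P : S → A → S → ℝ) (γ : ℝ) (v : S → ℝ) (w : S × A) :
    (Amat P γ *ᵥ v) w = v w.1 - γ * ∑ s', P w.1 w.2 s' * v s' := by
  simp [Amat, Matrix.mulVec, dotProduct, sub_mul, Finset.sum_sub_distrib, Finset.mul_sum, mul_assoc]

lemma Utilde_nonempty (P : S → A → S → ℝ) (α : S → ℝ) (γ : ℝ) (Φ : Matrix S K ℝ)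
    (hP : ∀ s a s', 0 ≤ P s a s') (hPsum : ∀ s a, ∑ s', P s a s' = 1)
    (hα : ∀ s, 0 ≤ α s) (hαsum : ∑ s, α s = 1) (hγ0 : 0 ≤ γ) (hγ1 : γ < 1)
    (π : S → A → ℝ) (hπ : isPolicy π) : (Utilde P α γ Φ π).Nonempty := by
  obtain ⟨d, hd0, hd1, hd⟩ := aux_occ (fun s s' => ∑ a, P s a s' * π s a) γ
    (fun s s' => Finset.sum_nonneg fun a _ => mul_nonneg (hP _ _ _) (hπ.1 _ _))
    (fun s => by
      rw [Finset.sum_comm]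
      simp only [← Finset.sum_mul, hPsum, one_mul, hπ.2]) hγ0 hγ1 α hα hαsum
  refine ⟨fun w => d w.1 * π w.1 w.2, fun w => mul_nonneg (hd0 _) (hπ.1 _ _), ?_, fun w => ?_⟩
  · have : (Amat P γ)ᵀ *ᵥ (fun w => d w.1 * π w.1 w.2) = (1 - γ) • α := by
      ext s'
      rw [Pi.smul_apply, smul_eq_mul, ← hd s']
      simp only [Amat, Matrix.mulVec, dotProduct, Matrix.transpose_apply, Matrix.of_apply, sub_mul,
        Finset.sum_sub_distrib, Fintype.sum_prod_type]
      congr 1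
      · rw [Finset.sum_eq_single s']
        · simp [← Finset.mul_sum, hπ.2]
        · intro b _ hb; simp [hb]
        · simp
      · simp only [Finset.mul_sum]
        refine Finset.sum_congr rfl fun s _ => Finset.sum_congr rfl fun a _ => by ring
    rw [this, Matrix.mulVec_smul]
    rfl
  · exact mul_le_of_le_one_left (hπ.1 _ _) (hd1 _)

lemma Utilde_eq (P : S → A → S → ℝ) (α : S → ℝ) (γ : ℝ) (Φ : Matrix S K ℝ) (π : S → A → ℝ)
    (u : S × A → ℝ) : u ∈ Utilde P α γ Φ π ↔
      u ∈ Set.Icc 0 (fun w : S × A => π w.1 w.2) ∧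
        (Amat P γ * Φ)ᵀ *ᵥ u = fun j => (1 - γ) * (Φᵀ *ᵥ α) j := by
  rw [Matrix.transpose_mul, ← Matrix.mulVec_mulVec]
  constructor
  · rintro ⟨h1, h2, h3⟩; exact ⟨⟨h1, h3⟩, h2⟩
  · rintro ⟨⟨h1, h3⟩, h2⟩; exact ⟨h1, h2, h3⟩

lemma Utilde_pair (P : S → A → S → ℝ) (α : S → ℝ) (γ : ℝ) (Φ : Matrix S K ℝ) (π : S → A → ℝ)
    (u : S × A → ℝ) (hu : u ∈ Utilde P α γ Φ π) (x : K → ℝ) :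
    ∑ w, u w * (Amat P γ *ᵥ (Φ *ᵥ x)) w = (1 - γ) * ∑ s, α s * (Φ *ᵥ x) s := by
  change u ⬝ᵥ (Amat P γ *ᵥ (Φ *ᵥ x)) = (1 - γ) * (α ⬝ᵥ (Φ *ᵥ x))
  have h : Φᵀ *ᵥ ((Amat P γ)ᵀ *ᵥ u) = (1 - γ) • (Φᵀ *ᵥ α) := hu.2.1
  rw [Matrix.dotProduct_mulVec, ← Matrix.mulVec_transpose, Matrix.dotProduct_mulVec,
    ← Matrix.mulVec_transpose, h, smul_dotProduct, smul_eq_mul, Matrix.dotProduct_mulVec α,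
    ← Matrix.mulVec_transpose]

lemma rho_eq (P : S → A → S → ℝ) (r : S → A → ℝ) (α : S → ℝ) (γ : ℝ) (Φ : Matrix S K ℝ)
    (hP : ∀ s a s', 0 ≤ P s a s') (hPsum : ∀ s a, ∑ s', P s a s' = 1)
    (hα : ∀ s, 0 ≤ α s) (hαsum : ∑ s, α s = 1) (hγ0 : 0 ≤ γ) (hγ1 : γ < 1)
    (π : S → A → ℝ) (hπ : isPolicy π) : ∃ u0 ∈ Utilde P α γ Φ π,
      (∀ u ∈ Utilde P α γ Φ π, bvec r ⬝ᵥ u0 ≤ bvec r ⬝ᵥ u) ∧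
      rhoTilde P r α γ Φ π = (bvec r ⬝ᵥ u0) / (1 - γ) := by
  have hne := Utilde_nonempty P α γ Φ hP hPsum hα hαsum hγ0 hγ1 π hπ
  have hset : Utilde P α γ Φ π = Set.Icc 0 (fun w : S × A => π w.1 w.2) ∩
      {u | (Amat P γ * Φ)ᵀ *ᵥ u = fun j => (1 - γ) * (Φᵀ *ᵥ α) j} := by
    ext u; exact Utilde_eq P α γ Φ π u
  have hc : IsCompact (Utilde P α γ Φ π) := by
    rw [hset]
    exact isCompact_Icc.inter_right (isClosed_eq (by fun_prop) continuous_const)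
  obtain ⟨u0, hu0, hmin⟩ := hc.exists_isMinOn hne
    (f := fun u => bvec r ⬝ᵥ u) (by simp only [dotProduct]; fun_prop)
  refine ⟨u0, hu0, fun u hu => hmin hu, ?_⟩
  have hg : 0 < 1 - γ := by linarith
  have hval : ∀ (x : K → ℝ), ∀ u ∈ Utilde P α γ Φ π,
      (∑ w, u w * ((Amat P γ *ᵥ (Φ *ᵥ x)) w - bvec r w)) / (1 - γ)
        = ∑ s, α s * (Φ *ᵥ x) s - (bvec r ⬝ᵥ u) / (1 - γ) := by
    intro x u hu
    simp only [mul_sub, Finset.sum_sub_distrib]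
    rw [Utilde_pair P α γ Φ π u hu x, sub_div, mul_div_cancel_left₀ _ hg.ne', dotProduct_comm]
    rfl
  unfold rhoTilde
  have : ∀ x : K → ℝ, (∑ s, α s * (Φ *ᵥ x) s -
    sSup ((fun u : S × A → ℝ =>
      (∑ w, u w * ((Amat P γ *ᵥ (Φ *ᵥ x)) w - bvec r w)) / (1 - γ)) ''
      Utilde P α γ Φ π)) = (bvec r ⬝ᵥ u0) / (1 - γ) := by
    intro x
    have hG : IsGreatest ((fun u : S × A → ℝ =>
      (∑ w, u w * ((Amat P γ *ᵥ (Φ *ᵥ x)) w - bvec r w)) / (1 - γ)) ''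
      Utilde P α γ Φ π) (∑ s, α s * (Φ *ᵥ x) s - (bvec r ⬝ᵥ u0) / (1 - γ)) := by
      refine ⟨⟨u0, hu0, hval x u0 hu0⟩, ?_⟩
      rintro _ ⟨u, hu, rfl⟩
      simp only []
      rw [hval x u hu]
      have h1 : bvec r ⬝ᵥ u0 ≤ bvec r ⬝ᵥ u := hmin hu
      have := div_le_div_of_nonneg_right h1 hg.le
      linarith
    rw [hG.csSup_eq]
    ring
  simp only [this]
  exact ciSup_const

lemma aux_sSup (X Y : Set ℝ) (h : upperBounds X = upperBounds Y) (hne : X.Nonempty ↔ Y.Nonempty) :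
    sSup X = sSup Y := by
  by_cases hX : X.Nonempty
  · by_cases hb : BddAbove X
    · have h1 := isLUB_csSup hX hb
      rw [IsLUB, h] at h1
      exact (IsLUB.csSup_eq h1 (hne.1 hX)).symm
    · have hb' : ¬ BddAbove Y := by unfold BddAbove at *; rwa [← h]
      rw [Real.sSup_of_not_bddAbove hb, Real.sSup_of_not_bddAbove hb']
  · have hY : ¬ Y.Nonempty := fun h => hX (hne.2 h)
    rw [Set.not_nonempty_iff_eq_empty.1 hX, Set.not_nonempty_iff_eq_empty.1 hY]

lemma weak_dual (P : S → A → S → ℝ) (r : S → A → ℝ) (α : S → ℝ) (γ : ℝ) (Φ : Matrix S K ℝ)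
    (hγ1 : γ < 1) (π : S → A → ℝ) (u : S × A → ℝ) (hu : u ∈ Utilde P α γ Φ π)
    (x : K → ℝ) (l : S × A → ℝ) (hl : ∀ w, 0 ≤ l w)
    (hx : ∀ w : S × A, (Amat P γ *ᵥ (Φ *ᵥ x)) w - bvec r w ≤ (1 - γ) * l w) :
    ∑ s, α s * (Φ *ᵥ x) s - ∑ w : S × A, π w.1 w.2 * l w ≤ (bvec r ⬝ᵥ u) / (1 - γ) := by
  have hg : 0 < 1 - γ := by linarith
  rw [le_div_iff₀ hg]
  have h1 := Utilde_pair P α γ Φ π u hu x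
  have h2 : ∑ w, u w * ((Amat P γ *ᵥ (Φ *ᵥ x)) w - bvec r w) ≤
      ∑ w : S × A, (1 - γ) * (π w.1 w.2 * l w) := by
    refine Finset.sum_le_sum fun w _ => ?_
    have a1 := mul_le_mul_of_nonneg_left (hx w) (hu.1 w)
    have a2 := mul_le_mul_of_nonneg_right (hu.2.2 w) (mul_nonneg hg.le (hl w))
    linarith
  simp only [mul_sub, Finset.sum_sub_distrib, ← Finset.mul_sum] at h2
  rw [h1] at h2
  have h3 : bvec r ⬝ᵥ u = ∑ w, u w * bvec r w := by rw [dotProduct_comm]; rfl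
  rw [h3]
  linarith

lemma strong_dual (P : S → A → S → ℝ) (r : S → A → ℝ) (α : S → ℝ) (γ : ℝ) (Φ : Matrix S K ℝ)
    (hγ1 : γ < 1) (π : S → A → ℝ) (hπ : isPolicy π) (u0 : S × A → ℝ)
    (hu0 : u0 ∈ Utilde P α γ Φ π)
    (hmin : ∀ u ∈ Utilde P α γ Φ π, bvec r ⬝ᵥ u0 ≤ bvec r ⬝ᵥ u) (ε : ℝ) (hε : 0 < ε) :
    ∃ (x : K → ℝ) (l : S × A → ℝ), (∀ w, 0 ≤ l w) ∧
    (∀ w : S × A, (Amat P γ *ᵥ (Φ *ᵥ x)) w - bvec r w ≤ (1 - γ) * l w) ∧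
    (bvec r ⬝ᵥ u0) / (1 - γ) - ε <
      ∑ s, α s * (Φ *ᵥ x) s - ∑ w : S × A, π w.1 w.2 * l w := by
  have hg : 0 < 1 - γ := by linarith
  obtain ⟨hb, hq⟩ := (Utilde_eq P α γ Φ π u0).1 hu0
  obtain ⟨x, hx⟩ := aux_strong (fun w : S × A => π w.1 w.2) (Amat P γ * Φ)
    (fun j => (1 - γ) * (Φᵀ *ᵥ α) j) (bvec r) u0 hb hq
    (fun u hu hq => hmin u ((Utilde_eq P α γ Φ π u).2 ⟨hu, hq⟩)) (ε * (1 - γ)) (by positivity)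
  let g : S × A → ℝ := fun w => (Amat P γ *ᵥ (Φ *ᵥ x)) w - bvec r w
  refine ⟨x, fun w => max (g w) 0 / (1 - γ), fun w => div_nonneg (le_max_right _ _) hg.le,
    fun w => ?_, ?_⟩
  · rw [mul_div_cancel₀ _ hg.ne']
    exact le_max_left _ _
  · have h := hx (fun w => if 0 ≤ g w then π w.1 w.2 else 0) ⟨fun w => by
      simp only [Pi.zero_apply]; split_ifs
      · exact hπ.1 _ _
      · exact le_rfl, fun w => by
      simp only []; split_ifs
      · exact le_rfl
      · exact hπ.1 _ _⟩
    have e1 : (fun j => (1 - γ) * (Φᵀ *ᵥ α) j) ⬝ᵥ x = (1 - γ) * ∑ s, α s * (Φ *ᵥ x) s := by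
      change ((1 - γ) • (Φᵀ *ᵥ α)) ⬝ᵥ x = (1 - γ) * (α ⬝ᵥ (Φ *ᵥ x))
      rw [smul_dotProduct, smul_eq_mul, Matrix.dotProduct_mulVec α, ← Matrix.mulVec_transpose]
    rw [e1, ← Matrix.mulVec_mulVec,
      dotProduct_comm (bvec r) (fun w : S × A => if 0 ≤ g w then π w.1 w.2 else 0)] at h
    have e2 : ∀ u : S × A → ℝ, u ⬝ᵥ (Amat P γ *ᵥ (Φ *ᵥ x)) - u ⬝ᵥ bvec r = ∑ w, u w * g w := by
      intro u
      simp only [g, mul_sub, Finset.sum_sub_distrib]; rfl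
    have e3 := e2 (fun w => if 0 ≤ g w then π w.1 w.2 else 0)
    have e4 : ∑ w : S × A, (if 0 ≤ g w then π w.1 w.2 else 0) * g w
        = (1 - γ) * ∑ w : S × A, π w.1 w.2 * (max (g w) 0 / (1 - γ)) := by
      rw [Finset.mul_sum]
      refine Finset.sum_congr rfl fun w _ => ?_
      have : (1 - γ) * (π w.1 w.2 * (max (g w) 0 / (1 - γ))) = π w.1 w.2 * max (g w) 0 := by
        field_simp
      rw [this]
      split_ifs with hh
      · rw [max_eq_left hh]
      · rw [max_eq_right (not_le.1 hh).le]; simp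
    rw [e4] at e3
    rw [sub_lt_iff_lt_add, div_lt_iff₀ hg]
    simp only []
    linarith

end DRADP

/-- the bilinear program maximizing `f(π,x,λ) = αᵀΦx − πᵀλ` over
feasible `(π,x,λ)` has optimal value `sup_{π∈Π_R} ρ̃(π)`, and if the supremum is
attained then it is attained at a deterministic policy greedy w.r.t. `Φx̄` with
complementary slackness `π̄ᵀλ̄ = 0`. -/
theorem bilinear_program_correct {S A K : Type*} [Fintype S] [Fintype A] [Fintype K]
    [DecidableEq S] [DecidableEq A]
    (P : S → A → S → ℝ) (r : S → A → ℝ) (α : S → ℝ) (γ : ℝ) (Φ : Matrix S K ℝ)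
    (hP : ∀ s a s', 0 ≤ P s a s') (hPsum : ∀ s a, ∑ s', P s a s' = 1)
    (hα : ∀ s, 0 ≤ α s) (hαsum : ∑ s, α s = 1)
    (hγ0 : 0 ≤ γ) (hγ1 : γ < 1)
    (Feas : Set ((S → A → ℝ) × (K → ℝ) × (S × A → ℝ)))
    (hFeas : Feas = {t | isPolicy t.1 ∧ (∀ w, 0 ≤ t.2.2 w) ∧
      ∀ w : S × A, (Amat P γ *ᵥ (Φ *ᵥ t.2.1)) w - bvec r w ≤ (1 - γ) * t.2.2 w})
    (f : (S → A → ℝ) × (K → ℝ) × (S × A → ℝ) → ℝ)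
    (hf : f = fun t => ∑ s, α s * (Φ *ᵥ t.2.1) s - ∑ w : S × A, t.1 w.1 w.2 * t.2.2 w) :
    sSup (f '' Feas) = sSup (rhoTilde P r α γ Φ '' {π | isPolicy π}) ∧
    ((∃ t ∈ Feas, ∀ t' ∈ Feas, f t' ≤ f t) →
      (∃ x : K → ℝ, Φ *ᵥ x = fun _ => (1 : ℝ)) →
      ∃ t ∈ Feas, (∀ t' ∈ Feas, f t' ≤ f t) ∧
        (∃ p : S → A, t.1 = detPol p ∧ isGreedy P r γ p (Φ *ᵥ t.2.1)) ∧
        ∑ w : S × A, t.1 w.1 w.2 * t.2.2 w = 0) := by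
  have hg : 0 < 1 - γ := by linarith
  subst hFeas hf
  constructor
  · apply aux_sSup
    · ext c
      constructor
      · rintro hc _ ⟨π, hπ, rfl⟩
        obtain ⟨u0, hu0, hmin, he⟩ := rho_eq P r α γ Φ hP hPsum hα hαsum hγ0 hγ1 π hπ
        rw [he]
        apply le_of_forall_pos_le_add
        intro ε hε
        obtain ⟨x, l, hl, hx, hlt⟩ := strong_dual P r α γ Φ hγ1 π hπ u0 hu0 hmin ε hε
        have := hc ⟨(π, x, l), ⟨hπ, hl, hx⟩, rfl⟩
        simp only [] at this
        linarith
      · rintro hc _ ⟨⟨π, x, l⟩, ⟨hπ, hl, hx⟩, rfl⟩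
        obtain ⟨u0, hu0, hmin, he⟩ := rho_eq P r α γ Φ hP hPsum hα hαsum hγ0 hγ1 π hπ
        have h1 := hc ⟨π, hπ, rfl⟩
        rw [he] at h1
        exact (weak_dual P r α γ Φ hγ1 π u0 hu0 x l hl hx).trans h1
    · constructor
      · rintro ⟨_, ⟨⟨π, x, l⟩, ⟨hπ, hl, hx⟩, rfl⟩⟩
        exact ⟨_, π, hπ, rfl⟩
      · rintro ⟨_, π, hπ, rfl⟩
        obtain ⟨u0, hu0, hmin, he⟩ := rho_eq P r α γ Φ hP hPsum hα hαsum hγ0 hγ1 π hπ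
        obtain ⟨x, l, hl, hx, hlt⟩ := strong_dual P r α γ Φ hγ1 π hπ u0 hu0 hmin 1 one_pos
        exact ⟨_, (π, x, l), ⟨hπ, hl, hx⟩, rfl⟩
  · rintro ⟨⟨π, x, l⟩, ⟨hπ, hl, hx⟩, hopt⟩ ⟨x1, hx1⟩
    simp only [] at hπ hl hx
    have hA : ∀ s : S, Nonempty A := by
      intro s
      by_contra hne
      rw [not_nonempty_iff] at hne
      have := hπ.2 s
      simp at this
    have hgr : ∀ s, ∃ a0, ∀ a, r s a + γ * ∑ s', P s a s' * (Φ *ᵥ x) s' ≤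
        r s a0 + γ * ∑ s', P s a0 s' * (Φ *ᵥ x) s' := by
      intro s
      haveI := hA s
      exact Finite.exists_max (fun a => r s a + γ * ∑ s', P s a s' * (Φ *ᵥ x) s')
    choose p hp using hgr
    set c : ℝ := ∑ w : S × A, π w.1 w.2 * l w with hc
    have hΦ : ∀ s, (Φ *ᵥ (x - c • x1)) s = (Φ *ᵥ x) s - c := by
      intro s
      rw [Matrix.mulVec_sub, Matrix.mulVec_smul, hx1]; simp
    have hPΦ : ∀ s a, ∑ s', P s a s' * (Φ *ᵥ (x - c • x1)) s' =
        ∑ s', P s a s' * (Φ *ᵥ x) s' - c := by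
      intro s a
      simp only [hΦ, mul_sub, Finset.sum_sub_distrib, ← Finset.sum_mul, hPsum, one_mul]
    let g : S × A → ℝ := fun w => (Amat P γ *ᵥ (Φ *ᵥ (x - c • x1))) w - bvec r w
    have hgp : ∀ s, g (s, p s) ≤ 0 := by
      intro s
      have h1 : ∀ a, (Amat P γ *ᵥ (Φ *ᵥ x)) (s, p s) - bvec r (s, p s) ≤ (1 - γ) * l (s, a) := by
        intro a
        refine le_trans ?_ (hx (s, a))
        rw [Amat_mulVec, Amat_mulVec]
        simp only [bvec]
        linarith [hp s a]
      have h2 : (Amat P γ *ᵥ (Φ *ᵥ x)) (s, p s) - bvec r (s, p s) ≤ (1 - γ) * c := by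
        calc (Amat P γ *ᵥ (Φ *ᵥ x)) (s, p s) - bvec r (s, p s)
            = ∑ a, π s a * ((Amat P γ *ᵥ (Φ *ᵥ x)) (s, p s) - bvec r (s, p s)) := by
              rw [← Finset.sum_mul, hπ.2, one_mul]
          _ ≤ ∑ a, π s a * ((1 - γ) * l (s, a)) :=
              Finset.sum_le_sum fun a _ => mul_le_mul_of_nonneg_left (h1 a) (hπ.1 s a)
          _ = (1 - γ) * ∑ a, π s a * l (s, a) := by
              rw [Finset.mul_sum]; exact Finset.sum_congr rfl fun a _ => by ring
          _ ≤ (1 - γ) * c := by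
              refine mul_le_mul_of_nonneg_left ?_ hg.le
              rw [hc, Fintype.sum_prod_type]
              exact Finset.single_le_sum (f := fun s => ∑ a, π s a * l (s, a))
                (fun i _ => Finset.sum_nonneg fun a _ => mul_nonneg (hπ.1 _ _) (hl _))
                (Finset.mem_univ s)
      rw [Amat_mulVec] at h2
      simp only [g]
      rw [Amat_mulVec, hPΦ, hΦ]
      linarith
    have hcs : ∑ w : S × A, detPol p w.1 w.2 * (max (g w) 0 / (1 - γ)) = 0 := by
      refine Finset.sum_eq_zero fun w _ => ?_
      obtain ⟨s, a⟩ := w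
      by_cases ha : a = p s
      · subst ha
        rw [max_eq_right (hgp s)]; simp
      · simp [detPol, ha]
    refine ⟨(detPol p, x - c • x1, fun w => max (g w) 0 / (1 - γ)), ⟨⟨fun s a => ?_, fun s => ?_⟩,
      fun w => div_nonneg (le_max_right _ _) hg.le, fun w => ?_⟩, fun t' ht' => ?_,
      ⟨p, rfl, fun s a => ?_⟩, hcs⟩
    · simp only [detPol]; split_ifs <;> norm_num
    · simp [detPol]
    · simp only []
      rw [mul_div_cancel₀ _ hg.ne']
      exact le_max_left _ _
    · refine (hopt t' ht').trans ?_
      simp only []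
      rw [hcs]
      simp only [hΦ, mul_sub, Finset.sum_sub_distrib, ← Finset.sum_mul, hαsum, one_mul]
      linarith
    · simp only []
      rw [hPΦ, hPΦ]
      linarith [hp s a]
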